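/- arXiv:1709.02546 — 2 statements merged into one kernel-verified Lean document; each statement's English description precedes it below -/
import Mathlib

section
/- Let n ≥ 2 and let f : Γ₊ → ℝ be smooth, symmetric, strictly positive, strictly increasing in each argument, positively homogeneous of degree one, and inverse concave. Then for every κ ∈ Γ₊ and all indices k ≠ l with κ_k ≠ κ_l, (ḟ^k(κ) − ḟ^l(κ))/(κ_k − κ_l) + ḟ^k(κ)/κ_l + ḟ^l(κ)/κ_k ≥ 0. -/
/-!
Being concave and symmetric, `f_*` satisfies the Schur–Ostrowski inequality
`(x_k - x_l) (∂_k f_* - ∂_l f_*) ≤ 0`: the segment from `x` to its reflection in the hyperplane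
`x_k = x_l` joins two points with equal values, so a concave function cannot decrease initially
along it. At `x = κ⁻¹` one has `∂_i f_* = κ_i² ḟ^i(κ) / f(κ)²`, so
`(κ_k - κ_l) (κ_k² ḟ^k(κ) - κ_l² ḟ^l(κ)) ≥ 0`, which is the claim multiplied by
`κ_k κ_l (κ_k - κ_l)²`.
-/

open Filter Topology Matrix

noncomputable section

/-- The open positive cone Γ₊ ⊂ ℝⁿ. -/
def posCone (n : ℕ) : Set (Fin n → ℝ) := {x | ∀ i, 0 < x i}

/-- The dual function f_*(x) = f(x₁⁻¹,…,xₙ⁻¹)⁻¹. -/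
def dualF (n : ℕ) (f : (Fin n → ℝ) → ℝ) : (Fin n → ℝ) → ℝ :=
  fun x => (f fun i => (x i)⁻¹)⁻¹

/-- First partial derivative ḟ^i(x) = ∂f/∂x_i(x). -/
def D1 (n : ℕ) (f : (Fin n → ℝ) → ℝ) (x : Fin n → ℝ) (i : Fin n) : ℝ :=
  fderiv ℝ f x (Pi.single i 1)

/-- Second partial derivative f̈^{ij}(x) = ∂²f/∂x_i∂x_j(x). -/
def D2 (n : ℕ) (f : (Fin n → ℝ) → ℝ) (x : Fin n → ℝ) (i j : Fin n) : ℝ :=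
  fderiv ℝ (fun y => fderiv ℝ f y (Pi.single i 1)) x (Pi.single j 1)

theorem sub_le_of_concaveOn_of_hasLineDerivAt {E : Type*} [AddCommGroup E] [Module ℝ E]
    {s : Set E} {g : E → ℝ} {x y : E} {d : ℝ} (hg : ConcaveOn ℝ s g) (hx : x ∈ s) (hy : y ∈ s)
    (hd : HasLineDerivAt ℝ g d x (y - x)) : g y - g x ≤ d := by
  have hline : HasDerivAt (g ∘ AffineMap.lineMap x y) d (0 : ℝ) := by
    simpa [HasLineDerivAt, Function.comp_def, AffineMap.lineMap_apply, add_comm] using hd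
  simpa [slope_def_field] using
    (hg.comp_affineMap (AffineMap.lineMap x y)).slope_le_of_hasDerivAt (x := 0) (y := 1)
      (by simpa using hx) (by simpa using hy) one_pos hline

section Pi

variable {ι : Type*} [DecidableEq ι]

theorem comp_swap_sub_self {R : Type*} [Ring R] (x : ι → R) (k l : ι) :
    x ∘ Equiv.swap k l - x = (x k - x l) • (Pi.single l 1 - Pi.single k 1) := by
  ext i
  rcases eq_or_ne i k with rfl | hik
  · rcases eq_or_ne i l with rfl | hil <;> simp [*]
  · rcases eq_or_ne i l with rfl | hil
    · simp [hik]
    · simp [hik, hil, Equiv.swap_apply_of_ne_of_ne hik hil]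

theorem schur_ostrowski_of_concaveOn [Finite ι] {s : Set (ι → ℝ)} {g : (ι → ℝ) → ℝ}
    {g' : (ι → ℝ) →L[ℝ] ℝ} {x : ι → ℝ} {k l : ι} (hg : ConcaveOn ℝ s g) (hx : x ∈ s)
    (hxs : x ∘ Equiv.swap k l ∈ s) (hsymm : g (x ∘ Equiv.swap k l) = g x)
    (hd : HasFDerivAt g g' x) :
    (x k - x l) * (g' (Pi.single k 1) - g' (Pi.single l 1)) ≤ 0 := by
  cases nonempty_fintype ι
  have hdir : 0 ≤ (x k - x l) * (g' (Pi.single l 1) - g' (Pi.single k 1)) := by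
    simpa [hsymm, comp_swap_sub_self] using
      sub_le_of_concaveOn_of_hasLineDerivAt hg hx hxs (hd.hasLineDerivAt _)
  linarith

end Pi

theorem hasFDerivAt_pi_inv {ι 𝕜 : Type*} [Finite ι] [NontriviallyNormedField 𝕜] {x : ι → 𝕜}
    (hx : ∀ i, x i ≠ 0) :
    HasFDerivAt (fun y : ι → 𝕜 => y⁻¹)
      (ContinuousLinearMap.pi fun i =>
        -(x i ^ 2)⁻¹ • (ContinuousLinearMap.proj i : (ι → 𝕜) →L[𝕜] 𝕜)) x := by
  cases nonempty_fintype ι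
  exact hasFDerivAt_pi.2 fun i =>
    (hasDerivAt_inv (hx i)).comp_hasFDerivAt x (hasFDerivAt_apply i x)

theorem isOpen_posCone (n : ℕ) : IsOpen (posCone n) := by
  simpa [posCone, Set.pi] using
    isOpen_set_pi (Set.finite_univ (α := Fin n)) fun _ _ => isOpen_Ioi (a := (0 : ℝ))

section Dual

variable {n : ℕ} {f : (Fin n → ℝ) → ℝ} {x : Fin n → ℝ}

theorem differentiableAt_dualF (hx : ∀ i, x i ≠ 0) (hf0 : f x⁻¹ ≠ 0)
    (hd : DifferentiableAt ℝ f x⁻¹) : DifferentiableAt ℝ (dualF n f) x :=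
  (hd.comp x (hasFDerivAt_pi_inv hx).differentiableAt).inv hf0

theorem D1_dualF (hx : ∀ i, x i ≠ 0) (hf0 : f x⁻¹ ≠ 0) (hd : DifferentiableAt ℝ f x⁻¹)
    (i : Fin n) : D1 n (dualF n f) x i = D1 n f x⁻¹ i / (x i * f x⁻¹) ^ 2 := by
  have hdual : HasFDerivAt (dualF n f) _ x :=
    (hasDerivAt_inv hf0).comp_hasFDerivAt x (hd.hasFDerivAt.comp x (hasFDerivAt_pi_inv hx))
  have hdir : (ContinuousLinearMap.pi fun j =>
      -(x j ^ 2)⁻¹ • (ContinuousLinearMap.proj j : (Fin n → ℝ) →L[ℝ] ℝ)) (Pi.single i 1)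
      = -(x i ^ 2)⁻¹ • Pi.single i 1 := by
    ext j
    rcases eq_or_ne j i with rfl | hji <;> simp [*]
  rw [D1, hdual.fderiv]
  simp only [_root_.smul_apply, ContinuousLinearMap.comp_apply, hdir, map_smul, smul_eq_mul, D1]
  field_simp

theorem schur_ostrowski_dualF {k l : Fin n} (hinvconc : ConcaveOn ℝ (posCone n) (dualF n f))
    (hx : x ∈ posCone n) (hf0 : f x⁻¹ ≠ 0) (hd : DifferentiableAt ℝ f x⁻¹)
    (hsymm : f (x⁻¹ ∘ Equiv.swap k l) = f x⁻¹) :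
    (x k - x l) * (D1 n f x⁻¹ k / x k ^ 2 - D1 n f x⁻¹ l / x l ^ 2) ≤ 0 := by
  have hx0 : ∀ i, x i ≠ 0 := fun i => (hx i).ne'
  have hdual_symm : dualF n f (x ∘ Equiv.swap k l) = dualF n f x := congrArg (·⁻¹) hsymm
  have hschur : (x k - x l) * (D1 n (dualF n f) x k - D1 n (dualF n f) x l) ≤ 0 :=
    schur_ostrowski_of_concaveOn hinvconc hx (fun i => hx _) hdual_symm
      (differentiableAt_dualF hx0 hf0 hd).hasFDerivAt
  rw [D1_dualF hx0 hf0 hd, D1_dualF hx0 hf0 hd, mul_pow, mul_pow, ← div_div, ← div_div,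
    ← sub_div, ← mul_div_assoc] at hschur
  exact nonpos_of_mul_nonpos_left hschur (by positivity)

end Dual

theorem offdiag_eq_neg_div {K : Type*} [Field K] {a b : K} (ha : a ≠ 0) (hb : b ≠ 0)
    (hab : a ≠ b) (p q : K) :
    (p - q) / (a - b) + p / b + q / a =
      -((a⁻¹ - b⁻¹) * (p / a⁻¹ ^ 2 - q / b⁻¹ ^ 2)) / (a - b) ^ 2 := by
  have hsub : a - b ≠ 0 := sub_ne_zero.2 hab
  field_simp
  ring

theorem inverse_concave_offdiag_ineq_general {n : ℕ} {f : (Fin n → ℝ) → ℝ}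
    (hf0 : ∀ x ∈ posCone n, f x ≠ 0) (hinvconc : ConcaveOn ℝ (posCone n) (dualF n f))
    {κ : Fin n → ℝ} (hκ : κ ∈ posCone n) (hd : DifferentiableAt ℝ f κ) {k l : Fin n}
    (hsymm : f (κ ∘ Equiv.swap k l) = f κ) (hne : κ k ≠ κ l) :
    0 ≤ (D1 n f κ k - D1 n f κ l) / (κ k - κ l) + D1 n f κ k / κ l + D1 n f κ l / κ k := by
  have hκinv : κ⁻¹ ∈ posCone n := fun i => inv_pos.2 (hκ i)
  have hschur := schur_ostrowski_dualF (k := k) (l := l) hinvconc hκinv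
  rw [inv_inv] at hschur
  rw [offdiag_eq_neg_div (hκ k).ne' (hκ l).ne' hne]
  exact div_nonneg (neg_nonneg.2 (hschur (hf0 κ hκ) hd hsymm)) (sq_nonneg _)

/-- if `f` is inverse concave then for `k ≠ l` with `κ_k ≠ κ_l`,
`(ḟ^k − ḟ^l)/(κ_k − κ_l) + ḟ^k/κ_l + ḟ^l/κ_k ≥ 0`. -/
theorem inverse_concave_offdiag_ineq (n : ℕ) (hn : 2 ≤ n) (f : (Fin n → ℝ) → ℝ)
    (hsmooth : ContDiffOn ℝ (⊤ : ℕ∞) f (posCone n))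
    (hsym : ∀ σ : Equiv.Perm (Fin n), ∀ x ∈ posCone n, f (x ∘ σ) = f x)
    (hpos : ∀ x ∈ posCone n, 0 < f x)
    (hmono : ∀ x ∈ posCone n, ∀ i, 0 < D1 n f x i)
    (hhom : ∀ k : ℝ, 0 < k → ∀ x ∈ posCone n, f (k • x) = k * f x)
    (hinvconc : ConcaveOn ℝ (posCone n) (dualF n f)) :
    ∀ κ ∈ posCone n, ∀ k l : Fin n, k ≠ l → κ k ≠ κ l →
      0 ≤ (D1 n f κ k - D1 n f κ l) / (κ k - κ l)
            + D1 n f κ k / κ l + D1 n f κ l / κ k := by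
  intro κ hκ k l _ hne
  have hd : DifferentiableAt ℝ f κ :=
    (hsmooth.contDiffAt ((isOpen_posCone n).mem_nhds hκ)).differentiableAt (by simp)
  exact inverse_concave_offdiag_ineq_general (fun x hx => (hpos x hx).ne') hinvconc hκ hd
    (hsym _ κ hκ) hne
end
end

section
/- Let n ≥ 2 and let f : Γ₊ → ℝ be smooth, symmetric, convex, strictly positive, positively homogeneous of degree one, and normalized so that f(1, …, 1) = n. Then the dual function f_* approaches zero on the boundary of Γ₊: for every sequence z^{(j)} ∈ Γ₊ with min_i z_i^{(j)} → 0, one has f_*(z^{(j)}) → 0. In fact 0 < f_*(z) ≤ min_i z_i for every z ∈ Γ₊. -/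
open Filter Topology Matrix

noncomputable section

/-!
Averaging `x` over the orbit of a transitive group of coordinate permutations gives the constant
vector with entries the mean of `x`. All points of the orbit lie in the sublevel set
`{y | f y ≤ f x}`, which is convex, so `f` at that constant vector is at most `f x`. With
`n t ≤ f (t, …, t)` this reads `∑ i, x i ≤ f x`, hence `x i ≤ f x` for each `i`, and substituting
`x i = (z i)⁻¹` turns this into `f_*(z) ≤ z i`.
-/

section Averaging

open Finset BigOperators

variable {𝕜 ι : Type*} [Field 𝕜] [LinearOrder 𝕜] [IsStrictOrderedRing 𝕜]

lemma expect_mem_of_convex {E : Type*} [AddCommGroup E] [Module 𝕜 E] [Module ℚ≥0 E]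
    {s : Set E} (hs : Convex 𝕜 s) [Fintype ι] [Nonempty ι] {p : ι → E} (hp : ∀ i, p i ∈ s) :
    𝔼 i, p i ∈ s := by
  have hcard : (Fintype.card ι : 𝕜) ≠ 0 := Nat.cast_ne_zero.mpr Fintype.card_ne_zero
  have hmem : ∑ i, (Fintype.card ι : 𝕜)⁻¹ • p i ∈ s :=
    hs.sum_mem (fun _ _ => by positivity) (by simp [hcard]) fun i _ => hp i
  rwa [← Finset.smul_sum, ← Fintype.card_smul_expect, ← Nat.cast_smul_eq_nsmul 𝕜,
    inv_smul_smul₀ hcard] at hmem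

variable {G : Type*} [Group G] [MulAction G ι] [MulAction.IsPretransitive G ι]

lemma expect_apply_smul_eq_expect {M : Type*} [AddCommMonoid M] [Module ℚ≥0 M] [Fintype G]
    [Fintype ι] (x : ι → M) (i : ι) : 𝔼 g : G, x (g • i) = 𝔼 j, x j := by
  have : Nonempty ι := ⟨i⟩
  have hindep (j : ι) : 𝔼 g : G, x (g • j) = 𝔼 g : G, x (g • i) := by
    obtain ⟨h, rfl⟩ := MulAction.exists_smul_eq G i j
    exact Fintype.expect_equiv (Equiv.mulRight h) _ _ fun g => by simp [mul_smul]
  calc 𝔼 g : G, x (g • i)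
      = 𝔼 j, 𝔼 g : G, x (g • j) := by simp only [hindep, Fintype.expect_const]
    _ = 𝔼 g : G, 𝔼 j, x (g • j) := expect_comm _ _ _
    _ = 𝔼 _g : G, 𝔼 j, x j := expect_congr rfl fun g _ =>
        Fintype.expect_equiv (MulAction.toPerm g) _ _ fun _ => rfl
    _ = 𝔼 j, x j := Fintype.expect_const _

variable (G) in
lemma map_const_expect_le_of_quasiconvexOn {β : Type*} [Preorder β] [Finite G] [Fintype ι]
    {s : Set (ι → 𝕜)} {f : (ι → 𝕜) → β} (hf : QuasiconvexOn 𝕜 s f) {x : ι → 𝕜}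
    (hs : ∀ g : G, (fun i => x (g • i)) ∈ s) (hsym : ∀ g : G, f (fun i => x (g • i)) ≤ f x) :
    f (fun _ => 𝔼 i, x i) ≤ f x := by
  have := Fintype.ofFinite G
  have hmean : 𝔼 g : G, (fun i => x (g • i)) = fun _ => 𝔼 i, x i := by
    ext i
    rw [expect_apply, expect_apply_smul_eq_expect]
  have hmem : 𝔼 g : G, (fun i => x (g • i)) ∈ {y ∈ s | f y ≤ f x} :=
    expect_mem_of_convex (hf (f x)) fun g => ⟨hs g, hsym g⟩
  exact hmean ▸ hmem.2

end Averaging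

section PosCone

variable {n : ℕ} {f : (Fin n → ℝ) → ℝ} {z : Fin n → ℝ}

lemma inv_mem_posCone (hz : z ∈ posCone n) : (fun i => (z i)⁻¹) ∈ posCone n :=
  fun i => inv_pos.mpr (hz i)

lemma dualF_pos (hf : ∀ x ∈ posCone n, 0 < f x) (hz : z ∈ posCone n) : 0 < dualF n f z :=
  inv_pos.mpr (hf _ (inv_mem_posCone hz))

lemma dualF_le_apply (hf : ∀ x ∈ posCone n, ∀ i, x i ≤ f x) (hz : z ∈ posCone n) (i : Fin n) :
    dualF n f z ≤ z i :=
  inv_le_of_inv_le₀ (hz i) (hf _ (inv_mem_posCone hz) i)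

variable [NeZero n] (G : Type*) [Group G] [Finite G] [MulAction G (Fin n)]
  [MulAction.IsPretransitive G (Fin n)]

open Finset BigOperators in
lemma sum_le_of_quasiconvexOn_posCone (hconv : QuasiconvexOn ℝ (posCone n) f)
    (hsym : ∀ g : G, ∀ x ∈ posCone n, f (fun i => x (g • i)) = f x)
    (hdiag : ∀ t : ℝ, 0 < t → n * t ≤ f fun _ => t) {x : Fin n → ℝ} (hx : x ∈ posCone n) :
    ∑ i, x i ≤ f x :=
  calc ∑ i, x i = n * 𝔼 i, x i := by rw [← Fintype.card_mul_expect, Fintype.card_fin]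
    _ ≤ f fun _ => 𝔼 i, x i := hdiag _ (expect_pos (fun i _ => hx i) univ_nonempty)
    _ ≤ f x := map_const_expect_le_of_quasiconvexOn G hconv (fun g i => hx (g • i))
        fun g => (hsym g x hx).le

theorem convex_dual_vanishes_on_boundary_general (hconv : QuasiconvexOn ℝ (posCone n) f)
    (hsym : ∀ g : G, ∀ x ∈ posCone n, f (fun i => x (g • i)) = f x)
    (hdiag : ∀ t : ℝ, 0 < t → n * t ≤ f fun _ => t) :
    (∀ z ∈ posCone n, 0 < dualF n f z ∧ dualF n f z ≤ ⨅ i, z i) ∧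
    (∀ {α : Type*} {l : Filter α} {z : α → Fin n → ℝ}, (∀ᶠ a in l, z a ∈ posCone n) →
      Tendsto (fun a => ⨅ i, z a i) l (𝓝 0) → Tendsto (fun a => dualF n f (z a)) l (𝓝 0)) := by
  have hcoord : ∀ x ∈ posCone n, ∀ i, x i ≤ f x := fun x hx i =>
    (Finset.single_le_sum (fun j _ => (hx j).le) (Finset.mem_univ i)).trans
      (sum_le_of_quasiconvexOn_posCone G hconv hsym hdiag hx)
  have hpos : ∀ x ∈ posCone n, 0 < f x := fun x hx => (hx 0).trans_le (hcoord x hx 0)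
  refine ⟨fun z hz => ⟨dualF_pos hpos hz, le_ciInf (dualF_le_apply hcoord hz)⟩,
    fun hz hlim => squeeze_zero' ?_ ?_ hlim⟩
  · exact hz.mono fun a ha => (dualF_pos hpos ha).le
  · exact hz.mono fun a ha => le_ciInf (dualF_le_apply hcoord ha)

end PosCone

/-- for a smooth, symmetric, convex, positive, 1-homogeneous `f` on Γ₊ with
`f(1,…,1) = n`, the dual satisfies `0 < f_*(z) ≤ min_i z_i`, and hence `f_*` approaches zero
along every sequence in Γ₊ whose minimal coordinate tends to zero. -/
theorem convex_dual_vanishes_on_boundary (n : ℕ) (hn : 2 ≤ n) (f : (Fin n → ℝ) → ℝ)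
    (hsmooth : ContDiffOn ℝ (⊤ : ℕ∞) f (posCone n))
    (hsym : ∀ σ : Equiv.Perm (Fin n), ∀ x ∈ posCone n, f (x ∘ σ) = f x)
    (hconv : ConvexOn ℝ (posCone n) f)
    (hpos : ∀ x ∈ posCone n, 0 < f x)
    (hhom : ∀ k : ℝ, 0 < k → ∀ x ∈ posCone n, f (k • x) = k * f x)
    (hnorm : f (fun _ => 1) = n) :
    (∀ z ∈ posCone n, 0 < dualF n f z ∧ dualF n f z ≤ ⨅ i, z i) ∧
    (∀ z : ℕ → Fin n → ℝ, (∀ j, z j ∈ posCone n) →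
      Tendsto (fun j => ⨅ i, z j i) atTop (𝓝 0) →
      Tendsto (fun j => dualF n f (z j)) atTop (𝓝 0)) := by
  have : NeZero n := ⟨by lia⟩
  have hdiag (t : ℝ) (ht : 0 < t) : n * t ≤ f fun _ => t := by
    simpa only [Pi.smul_def, smul_eq_mul, mul_one, hnorm, mul_comm t n] using
      (hhom t ht (fun _ => 1) fun _ => one_pos).ge
  obtain ⟨hbound, hlim⟩ := convex_dual_vanishes_on_boundary_general (Equiv.Perm (Fin n))
    hconv.quasiconvexOn hsym hdiag
  exact ⟨hbound, fun z hz => hlim (.of_forall hz)⟩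
end
end
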